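/- Continuum fixed point positivity. Let ω be an averaging kernel (not necessarily regular) and (hf, hg) ∈ 𝒳². Suppose there exist (0,1)-interpolating F, G ∈ Ψ with G(x) = hg((F ⊗ ω)(x)) and F(x) = hf((G ⊗ ω)(x)) for all x ∈ ℝ (a (0,1)-interpolating spatial fixed point of the continuum spatially coupled recursion). Then Φ(hf, hg; u, v) ≥ 0 for all (u, v) ∈ [0,1]², and A(hf, hg) = 0. -/

import Mathlib

open MeasureTheory Filter Set

noncomputable section

/-- Convolution `(f ⊗ ω)(x) = ∫ y, f y · ω (x − y)`. -/
def conv (f ω : ℝ → ℝ) (x : ℝ) : ℝ := ∫ y : ℝ, f y * ω (x - y)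

/-- `ω` is an averaging kernel: even, nonnegative, of bounded variation, integrating to 1. -/
def IsAveragingKernel (ω : ℝ → ℝ) : Prop :=
  (∀ x, ω (-x) = ω x) ∧ (∀ x, 0 ≤ ω x) ∧ BoundedVariationOn ω Set.univ ∧
    MeasureTheory.Integrable ω ∧ (∫ x : ℝ, ω x) = 1

/-- The essential supremum `‖ω‖∞` of a kernel, as a real number. -/
def kerSup (ω : ℝ → ℝ) : ℝ := (eLpNorm ω ⊤ MeasureTheory.volume).toReal

/-- `ω` is regular: for some `W ∈ (0,∞]`, it vanishes outside `[−W, W]` and is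
positive on `(−W, W)` (the case `W = ∞` being that `ω` is everywhere positive). -/
def IsRegularKernel (ω : ℝ → ℝ) : Prop :=
  (∀ x, 0 < ω x) ∨
    ∃ W : ℝ, 0 < W ∧ (∀ x, W < |x| → ω x = 0) ∧ (∀ x, |x| < W → 0 < ω x)

/-- Membership in `𝒳`: nondecreasing self-maps of `[0,1]`. -/
def MemX (h : ℝ → ℝ) : Prop :=
  MonotoneOn h (Icc 0 1) ∧ MapsTo h (Icc 0 1) (Icc 0 1)

/-- Left limit `h(u−)` of `h ∈ 𝒳` at `u ∈ [0,1]`, with the convention `h(0−) = 0`. -/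
def lm (h : ℝ → ℝ) (u : ℝ) : ℝ := if u ≤ 0 then 0 else sSup (h '' Ico 0 u)

/-- Right limit `h(u+)` of `h ∈ 𝒳` at `u ∈ [0,1]`, with the convention `h(1+) = 1`. -/
def rm (h : ℝ → ℝ) (u : ℝ) : ℝ := if 1 ≤ u then 1 else sInf (h '' Ioc u 1)

/-- A canonical generalized inverse of `h ∈ 𝒳` (any valid inverse has the same integrals,
so the potential below is unambiguous). -/
def Xinv (h : ℝ → ℝ) (v : ℝ) : ℝ := sInf ({1} ∪ {u ∈ Icc (0:ℝ) 1 | v ≤ h u})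

/-- The potential `Φ(hf, hg; u, v) = ∫₀ᵘ hg⁻¹ + ∫₀ᵛ hf⁻¹ − u·v`. -/
def Pot (hf hg : ℝ → ℝ) (u v : ℝ) : ℝ :=
  (∫ x in (0:ℝ)..u, Xinv hg x) + (∫ x in (0:ℝ)..v, Xinv hf x) - u * v

/-- `A(hf, hg) = Φ(hf, hg; 1, 1)`. -/
def Agap (hf hg : ℝ → ℝ) : ℝ := Pot hf hg 1 1

/-- `(u,v)` is a crossing point of `(hf, hg)`:
`u ∈ [hg(v−), hg(v+)]` and `v ∈ [hf(u−), hf(u+)]`. -/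
def IsCrossing (hf hg : ℝ → ℝ) (u v : ℝ) : Prop :=
  u ∈ Icc (0:ℝ) 1 ∧ v ∈ Icc (0:ℝ) 1 ∧
    u ∈ Icc (lm hg v) (rm hg v) ∧ v ∈ Icc (lm hf u) (rm hf u)

/-- The strictly positive gap condition: there is a nontrivial crossing point, and every
nontrivial crossing point satisfies `Φ(hf, hg; u, v) > max {0, A(hf, hg)}`. -/
def StrictPosGap (hf hg : ℝ → ℝ) : Prop :=
  (∃ u v, IsCrossing hf hg u v ∧ ¬(u = 0 ∧ v = 0) ∧ ¬(u = 1 ∧ v = 1)) ∧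
    ∀ u v, IsCrossing hf hg u v → ¬(u = 0 ∧ v = 0) → ¬(u = 1 ∧ v = 1) →
      max 0 (Agap hf hg) < Pot hf hg u v

/-- Membership in `Ψ`: nondecreasing functions `ℝ → [0,1]`. -/
def MemPsi (f : ℝ → ℝ) : Prop := Monotone f ∧ ∀ x, f x ∈ Icc (0:ℝ) 1

/-- `f` is `(a,b)`-interpolating: limits `a` at `−∞` and `b` at `+∞`. -/
def Interpolates (f : ℝ → ℝ) (a b : ℝ) : Prop :=
  Filter.Tendsto f Filter.atBot (nhds a) ∧ Filter.Tendsto f Filter.atTop (nhds b)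

/-!
Write `Ω` for the primitive of `ω` and `q_F`, `q_G` for the quantile functions of `F`, `G`. By the
layer-cake formula `(F ⊗ ω)(x) = ∫₀¹ Ω (x - q_F t) dt`, and the fixed point equation for `G` says
that `hg⁻¹ s = (F ⊗ ω)(q_G s)`. Hence `∫₀ᵘ hg⁻¹` is the integral of
`K (s, t) = Ω (q_G s - q_F t)` over `A = (0, u) × (0, 1)`, and, since `Ω z + Ω (-z) = 1`,
`∫₀ᵛ hf⁻¹` is the integral of `1 - K` over `B = (0, 1) × (0, v)`. The two integrands add up to `1`
on `A ∩ B`, which has area `u v`, so the potential is the integral of `K` over `A \ B` plus that of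
`1 - K` over `B \ A`: it is nonnegative, and it vanishes when `A = B`.
-/

section SetIntegral

variable {α : Type*} [MeasurableSpace α] {μ : Measure α}

theorem setIntegral_add_setIntegral_eq_inter_add_sdiff {E : Type*} [NormedAddCommGroup E]
    [NormedSpace ℝ E] {f g : α → E} {A B : Set α}
    (hA : MeasurableSet A) (hB : MeasurableSet B) (hf : IntegrableOn f A μ)
    (hg : IntegrableOn g B μ) :
    (∫ x in A, f x ∂μ) + ∫ x in B, g x ∂μ =
      (∫ x in A ∩ B, (f x + g x) ∂μ) + ((∫ x in A \ B, f x ∂μ) + ∫ x in B \ A, g x ∂μ) := by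
  rw [integral_add (hf.mono_set inter_subset_left) (hg.mono_set inter_subset_right),
    ← integral_inter_add_sdiff hB hf, ← integral_inter_add_sdiff hA hg, inter_comm B A]
  abel

theorem setIntegral_indicator_Iic_const {a b c : ℝ} (hc : c ∈ Icc a b) (r : ℝ) :
    ∫ t in Ioo a b, (Iic c).indicator (fun _ => r) t = (c - a) * r := by
  have hinter : Ioc a b ∩ Iic c = Ioc a c := by
    rw [Ioc_inter_Iic, min_eq_right hc.2]
  rw [← integral_Ioc_eq_integral_Ioo, setIntegral_indicator measurableSet_Iic, hinter]
  simp [hc.1]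

theorem integral_sub_mul_eq_integral_setIntegral_superlevel [SFinite μ] {f φ : α → ℝ} {a b : ℝ}
    (hf : Measurable f) (hfab : ∀ x, f x ∈ Icc a b) (hφ : Integrable φ μ) :
    ∫ x, (f x - a) * φ x ∂μ = ∫ t in Ioo a b, ∫ x in {x | t ≤ f x}, φ x ∂μ := by
  have hsub : MeasurableSet {p : α × ℝ | p.2 ≤ f p.1} :=
    measurableSet_le measurable_snd (hf.comp measurable_fst)
  have hint : Integrable ({p : α × ℝ | p.2 ≤ f p.1}.indicator fun p => φ p.1)
      (μ.prod (volume.restrict (Ioo a b))) := (hφ.comp_fst _).indicator hsub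
  calc ∫ x, (f x - a) * φ x ∂μ
      = ∫ x, (∫ t in Ioo a b, (Iic (f x)).indicator (fun _ => φ x) t) ∂μ := by
        simp only [setIntegral_indicator_Iic_const (hfab _)]
    _ = ∫ t in Ioo a b, ∫ x, {x | t ≤ f x}.indicator φ x ∂μ :=
        integral_integral_swap (f := fun x t => (Iic (f x)).indicator (fun _ => φ x) t) hint
    _ = ∫ t in Ioo a b, ∫ x in {x | t ≤ f x}, φ x ∂μ := by
        simp only [integral_indicator (measurableSet_le measurable_const hf)]

end SetIntegral

section Quantile

/-- The quantile function (left-continuous generalized inverse) of a nondecreasing `F`. It is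
meaningful only for levels strictly between the limits of `F` at `-∞` and `+∞`; elsewhere the
infimum may be a junk value. -/
def quantile (F : ℝ → ℝ) (t : ℝ) : ℝ := sInf {x | t ≤ F x}

variable {F : ℝ → ℝ} {a b t x : ℝ}

theorem Interpolates.mem_Icc (hFi : Interpolates F a b) (hF : Monotone F) (x : ℝ) :
    F x ∈ Icc a b :=
  ⟨hF.le_of_tendsto hFi.1 x, hF.ge_of_tendsto hFi.2 x⟩

theorem Interpolates.nonempty_superlevel (hFi : Interpolates F a b) (ht : t < b) :
    {x | t ≤ F x}.Nonempty :=
  (hFi.2.eventually_const_le ht).exists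

theorem Interpolates.bddBelow_superlevel (hFi : Interpolates F a b) (hF : Monotone F)
    (ht : a < t) : BddBelow {x | t ≤ F x} := by
  obtain ⟨y, hy⟩ := (hFi.1.eventually_lt_const ht).exists
  exact ⟨y, fun x hx => (hF.reflect_lt (hy.trans_le hx)).le⟩

theorem quantile_le (hF : Monotone F) (hFi : Interpolates F a b) (ht : a < t) (h : t ≤ F x) :
    quantile F t ≤ x :=
  csInf_le (hFi.bddBelow_superlevel hF ht) h

theorem le_of_quantile_lt (hF : Monotone F) (hFi : Interpolates F a b) (ht : t < b)
    (h : quantile F t < x) : t ≤ F x := by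
  obtain ⟨y, hy, hyx⟩ := exists_lt_of_csInf_lt (hFi.nonempty_superlevel ht) h
  exact hy.trans (hF hyx.le)

theorem monotoneOn_quantile (hF : Monotone F) (hFi : Interpolates F a b) :
    MonotoneOn (quantile F) (Ioo a b) := fun _ hs _ ht hst =>
  csInf_le_csInf (hFi.bddBelow_superlevel hF hs.1) (hFi.nonempty_superlevel ht.2)
    fun _ hx => hst.trans hx

theorem aemeasurable_quantile (hF : Monotone F) (hFi : Interpolates F a b) :
    AEMeasurable (quantile F) (volume.restrict (Ioo a b)) :=
  aemeasurable_restrict_of_monotoneOn measurableSet_Ioo (monotoneOn_quantile hF hFi)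

theorem superlevel_ae_eq_Ici_quantile (hF : Monotone F) (hFi : Interpolates F a b)
    (ht : t ∈ Ioo a b) : {x | t ≤ F x} =ᵐ[volume] Ici (quantile F t) := by
  refine Filter.EventuallyLE.antisymm
    (LE.le.eventuallyLE fun x hx => quantile_le hF hFi ht.1 hx) ?_
  refine Ioi_ae_eq_Ici.symm.le.trans (LE.le.eventuallyLE fun x hx => ?_)
  exact le_of_quantile_lt hF hFi ht.2 hx

theorem integral_sub_mul_eq_integral_setIntegral_Ici_quantile (hF : Monotone F)
    (hFi : Interpolates F a b) {φ : ℝ → ℝ} (hφ : Integrable φ) :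
    ∫ x, (F x - a) * φ x = ∫ t in Ioo a b, ∫ x in Ici (quantile F t), φ x := by
  rw [integral_sub_mul_eq_integral_setIntegral_superlevel hF.measurable (hFi.mem_Icc hF) hφ]
  exact setIntegral_congr_fun measurableSet_Ioo fun t ht =>
    setIntegral_congr_set (superlevel_ae_eq_Ici_quantile hF hFi ht)

end Quantile

section Primitive

/-- The primitive of `ω` vanishing at `-∞`; for an averaging kernel, its cumulative distribution
function. -/
def primitive (ω : ℝ → ℝ) (z : ℝ) : ℝ := ∫ y in Iic z, ω y

variable {ω : ℝ → ℝ}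

theorem continuous_primitive (hω : Integrable ω) : Continuous (primitive ω) := by
  have hsplit : primitive ω = fun z => (∫ y in Iic (0 : ℝ), ω y) + ∫ y in (0 : ℝ)..z, ω y := by
    funext z
    rw [← intervalIntegral.integral_Iic_sub_Iic hω.integrableOn hω.integrableOn, primitive]
    ring
  rw [hsplit]
  exact continuous_const.add
    (intervalIntegral.continuous_primitive (fun _ _ => hω.intervalIntegrable) 0)

theorem norm_primitive_le (hω : Integrable ω) (z : ℝ) : ‖primitive ω z‖ ≤ ∫ y, ‖ω y‖ :=
  (norm_integral_le_integral_norm _).trans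
    (setIntegral_le_integral hω.norm (Eventually.of_forall fun _ => norm_nonneg _))

theorem primitive_nonneg (hω : ∀ x, 0 ≤ ω x) (z : ℝ) : 0 ≤ primitive ω z :=
  integral_nonneg hω

theorem primitive_add_primitive_neg (heven : ∀ x, ω (-x) = ω x) (hω : Integrable ω) (z : ℝ) :
    primitive ω z + primitive ω (-z) = ∫ x, ω x := by
  have hneg : primitive ω (-z) = ∫ y in Ioi z, ω y := by
    simpa only [heven, neg_neg, primitive] using integral_comp_neg_Iic (-z) ω
  rw [hneg, primitive, intervalIntegral.integral_Iic_add_Ioi hω.integrableOn hω.integrableOn]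

theorem setIntegral_Ici_comp_sub_left (ω : ℝ → ℝ) (x c : ℝ) :
    ∫ y in Ici c, ω (x - y) = primitive ω (x - c) := by
  have h := (Measure.measurePreserving_sub_left volume x).setIntegral_preimage_emb
    (MeasurableEquiv.subLeft x).measurableEmbedding ω (Iic (x - c))
  rwa [preimage_const_sub_Iic, sub_sub_cancel] at h

end Primitive

section Convolution

variable {ω F : ℝ → ℝ}

theorem conv_mem_Icc (hω0 : ∀ x, 0 ≤ ω x) (hω1 : ∫ x, ω x = 1) (hF : ∀ x, F x ∈ Icc (0 : ℝ) 1)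
    (x : ℝ) : conv F ω x ∈ Icc (0 : ℝ) 1 := by
  have hω : Integrable ω := .of_integral_ne_zero (hω1 ▸ one_ne_zero)
  have hnonneg : ∀ y, 0 ≤ F y * ω (x - y) := fun y => mul_nonneg (hF y).1 (hω0 _)
  refine ⟨integral_nonneg hnonneg, ?_⟩
  calc conv F ω x ≤ ∫ y, ω (x - y) :=
        integral_mono_of_nonneg (Eventually.of_forall hnonneg) (hω.comp_sub_left x)
          (Eventually.of_forall fun y => mul_le_of_le_one_left (hω0 _) (hF y).2)
    _ = 1 := by rw [integral_sub_left_eq_self, hω1]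

theorem conv_eq_integral_primitive_sub_quantile (hω : Integrable ω) (hF : Monotone F)
    (hFi : Interpolates F 0 1) (x : ℝ) :
    conv F ω x = ∫ t in Ioo (0 : ℝ) 1, primitive ω (x - quantile F t) := by
  have hlayer := integral_sub_mul_eq_integral_setIntegral_Ici_quantile hF hFi (hω.comp_sub_left x)
  simpa only [conv, sub_zero, setIntegral_Ici_comp_sub_left] using hlayer

theorem continuous_conv (hω : Integrable ω) (hF : Monotone F) (hFi : Interpolates F 0 1) :
    Continuous (conv F ω) := by
  rw [funext (conv_eq_integral_primitive_sub_quantile hω hF hFi)]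
  have hΩ := continuous_primitive hω
  refine continuous_of_dominated (bound := fun _ => ∫ y, ‖ω y‖) (fun x => ?_)
    (fun x => Eventually.of_forall fun t => norm_primitive_le hω _) (integrable_const _)
    (Eventually.of_forall fun t => by fun_prop)
  exact (hΩ.measurable.comp_aemeasurable
    ((aemeasurable_quantile hF hFi).const_sub x)).aestronglyMeasurable

end Convolution

section GeneralizedInverse

variable {h k G : ℝ → ℝ} {s : ℝ}

theorem Xinv_le {u : ℝ} (hu : u ∈ Icc (0 : ℝ) 1) (hs : s ≤ h u) : Xinv h s ≤ u := by
  refine csInf_le ⟨0, ?_⟩ (Or.inr ⟨hu, hs⟩)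
  rintro w (rfl | hw)
  exacts [zero_le_one, hw.1.1]

theorem le_Xinv {u : ℝ} (hh : MonotoneOn h (Icc 0 1)) (hu : u ∈ Icc (0 : ℝ) 1) (hs : h u < s) :
    u ≤ Xinv h s := by
  refine le_csInf ⟨1, Or.inl rfl⟩ ?_
  rintro w (rfl | hw)
  exacts [hu.2, (hh.reflect_lt hu hw.1 (hs.trans_le hw.2)).le]

theorem Xinv_eq_apply_quantile (hh : MonotoneOn h (Icc 0 1)) (hk : Continuous k)
    (hk01 : ∀ x, k x ∈ Icc (0 : ℝ) 1) (hG : Monotone G) (hGi : Interpolates G 0 1)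
    (hfix : ∀ x, G x = h (k x)) (hs : s ∈ Ioo (0 : ℝ) 1) :
    Xinv h s = k (quantile G s) := by
  have hcont := hk.tendsto (quantile G s)
  apply le_antisymm
  · refine ge_of_tendsto (hcont.mono_left (nhdsWithin_le_nhds (s := Ioi (quantile G s)))) ?_
    filter_upwards [self_mem_nhdsWithin] with x hx
    exact Xinv_le (hk01 x) (hfix x ▸ le_of_quantile_lt hG hGi hs.2 hx)
  · refine le_of_tendsto (hcont.mono_left (nhdsWithin_le_nhds (s := Iio (quantile G s)))) ?_
    filter_upwards [self_mem_nhdsWithin] with x hx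
    exact le_Xinv hh (hk01 x) (hfix x ▸ lt_of_not_ge fun hle =>
      (quantile_le hG hGi hs.1 hle).not_gt hx)

end GeneralizedInverse

section QuantileKernel

/-- The kernel `K (s, t) = Ω (q_G s - q_F t)` comparing the quantiles of `G` and `F` through the
primitive `Ω` of `ω`. With `F` and `G` exchanged, `K` becomes `1 - K` up to swapping the two
coordinates. -/
def quantileKernel (ω F G : ℝ → ℝ) (p : ℝ × ℝ) : ℝ :=
  primitive ω (quantile G p.1 - quantile F p.2)

variable {ω F G : ℝ → ℝ}

theorem quantileKernel_add_quantileKernel_swap (heven : ∀ x, ω (-x) = ω x) (hω1 : ∫ x, ω x = 1)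
    (p : ℝ × ℝ) : quantileKernel ω F G p + quantileKernel ω G F p.swap = 1 := by
  have hω : Integrable ω := .of_integral_ne_zero (hω1 ▸ one_ne_zero)
  rw [← hω1, ← primitive_add_primitive_neg heven hω (quantile G p.1 - quantile F p.2), neg_sub]
  rfl

theorem integrableOn_quantileKernel (hω : Integrable ω) (hF : Monotone F) (hG : Monotone G)
    (hFi : Interpolates F 0 1) (hGi : Interpolates G 0 1) :
    IntegrableOn (quantileKernel ω F G) (Ioo 0 1 ×ˢ Ioo 0 1) := by
  rw [IntegrableOn, Measure.volume_eq_prod, ← Measure.prod_restrict]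
  refine Integrable.of_bound (C := ∫ y, ‖ω y‖) ?_
    (Eventually.of_forall fun p => norm_primitive_le hω _)
  exact ((continuous_primitive hω).measurable.comp_aemeasurable
    ((aemeasurable_quantile hG hGi).comp_fst.sub
      (aemeasurable_quantile hF hFi).comp_snd)).aestronglyMeasurable

theorem integral_Xinv_eq_setIntegral_quantileKernel {h : ℝ → ℝ} (hω0 : ∀ x, 0 ≤ ω x)
    (hω1 : ∫ x, ω x = 1) (hh : MonotoneOn h (Icc 0 1)) (hF : Monotone F) (hG : Monotone G)
    (hFi : Interpolates F 0 1) (hGi : Interpolates G 0 1) (hfix : ∀ x, G x = h (conv F ω x))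
    {u : ℝ} (hu : u ∈ Icc (0 : ℝ) 1) :
    ∫ s in (0 : ℝ)..u, Xinv h s = ∫ p in Ioo 0 u ×ˢ Ioo 0 1, quantileKernel ω F G p := by
  have hω : Integrable ω := .of_integral_ne_zero (hω1 ▸ one_ne_zero)
  have hint := (integrableOn_quantileKernel hω hF hG hFi hGi).mono_set
    (prod_mono_left (Ioo_subset_Ioo_right hu.2))
  have hXinv : ∀ s ∈ Ioo 0 u, Xinv h s = ∫ t in Ioo (0 : ℝ) 1, quantileKernel ω F G (s, t) :=
    fun s hs => by
      rw [Xinv_eq_apply_quantile hh (continuous_conv hω hF hFi)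
          (conv_mem_Icc hω0 hω1 (hFi.mem_Icc hF)) hG hGi hfix ⟨hs.1, hs.2.trans_le hu.2⟩,
        conv_eq_integral_primitive_sub_quantile hω hF hFi]
      rfl
  rw [intervalIntegral.integral_of_le hu.1, integral_Ioc_eq_integral_Ioo,
    setIntegral_congr_fun measurableSet_Ioo hXinv]
  exact (setIntegral_prod _ hint).symm

end QuantileKernel

section Potential

variable {ω hf hg F G : ℝ → ℝ}

theorem volume_real_Ioo_prod_Ioo_inter {u v : ℝ} (hu : u ∈ Icc (0 : ℝ) 1)
    (hv : v ∈ Icc (0 : ℝ) 1) :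
    volume.real ((Ioo 0 u ×ˢ Ioo 0 1) ∩ (Ioo 0 1 ×ˢ Ioo 0 v) : Set (ℝ × ℝ)) = u * v := by
  rw [prod_inter_prod, Ioo_inter_Ioo, Ioo_inter_Ioo, Measure.volume_eq_prod, measureReal_prod_prod]
  simp [hu.1, hu.2, hv.1, hv.2]

theorem Pot_eq_setIntegral_sdiff_add_setIntegral_sdiff (heven : ∀ x, ω (-x) = ω x)
    (hω0 : ∀ x, 0 ≤ ω x) (hω1 : ∫ x, ω x = 1)
    (hhf : MonotoneOn hf (Icc 0 1)) (hhg : MonotoneOn hg (Icc 0 1))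
    (hF : Monotone F) (hG : Monotone G) (hFi : Interpolates F 0 1) (hGi : Interpolates G 0 1)
    (hfixG : ∀ x, G x = hg (conv F ω x)) (hfixF : ∀ x, F x = hf (conv G ω x))
    {u v : ℝ} (hu : u ∈ Icc (0 : ℝ) 1) (hv : v ∈ Icc (0 : ℝ) 1) :
    Pot hf hg u v =
      (∫ p in (Ioo 0 u ×ˢ Ioo 0 1) \ (Ioo 0 1 ×ˢ Ioo 0 v), quantileKernel ω F G p) +
        ∫ p in (Ioo 0 1 ×ˢ Ioo 0 v) \ (Ioo 0 u ×ˢ Ioo 0 1), quantileKernel ω G F p.swap := by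
  have hω : Integrable ω := .of_integral_ne_zero (hω1 ▸ one_ne_zero)
  have hintA : IntegrableOn (quantileKernel ω F G) (Ioo 0 u ×ˢ Ioo 0 1) :=
    (integrableOn_quantileKernel hω hF hG hFi hGi).mono_set
      (prod_mono_left (Ioo_subset_Ioo_right hu.2))
  have hintB : IntegrableOn (fun p => quantileKernel ω G F p.swap) (Ioo 0 1 ×ˢ Ioo 0 v) :=
    ((integrableOn_quantileKernel hω hG hF hGi hFi).mono_set
      (prod_mono_left (Ioo_subset_Ioo_right hv.2))).swap
  have hswap : ∫ p in Ioo 0 v ×ˢ Ioo 0 1, quantileKernel ω G F p =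
      ∫ p in Ioo 0 1 ×ˢ Ioo 0 v, quantileKernel ω G F p.swap :=
    (setIntegral_prod_swap _ _ _).symm
  rw [Pot, integral_Xinv_eq_setIntegral_quantileKernel hω0 hω1 hhg hF hG hFi hGi hfixG hu,
    integral_Xinv_eq_setIntegral_quantileKernel hω0 hω1 hhf hG hF hGi hFi hfixF hv, hswap,
    setIntegral_add_setIntegral_eq_inter_add_sdiff (measurableSet_Ioo.prod measurableSet_Ioo)
      (measurableSet_Ioo.prod measurableSet_Ioo) hintA hintB]
  simp only [quantileKernel_add_quantileKernel_swap heven hω1, setIntegral_const, smul_eq_mul,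
    mul_one, volume_real_Ioo_prod_Ioo_inter hu hv, add_sub_cancel_left]

end Potential

theorem continuum_fixed_point_positivity_general
    (ω hf hg F G : ℝ → ℝ) (heven : ∀ x, ω (-x) = ω x) (hω0 : ∀ x, 0 ≤ ω x)
    (hω1 : ∫ x, ω x = 1)
    (hhf : MonotoneOn hf (Icc 0 1)) (hhg : MonotoneOn hg (Icc 0 1))
    (hF : Monotone F) (hG : Monotone G)
    (hFi : Interpolates F 0 1) (hGi : Interpolates G 0 1)
    (hfixG : ∀ x, G x = hg (conv F ω x)) (hfixF : ∀ x, F x = hf (conv G ω x)) :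
    (∀ u ∈ Icc (0 : ℝ) 1, ∀ v ∈ Icc (0 : ℝ) 1, 0 ≤ Pot hf hg u v) ∧ Agap hf hg = 0 := by
  have hPot {u v : ℝ} (hu : u ∈ Icc (0 : ℝ) 1) (hv : v ∈ Icc (0 : ℝ) 1) :=
    Pot_eq_setIntegral_sdiff_add_setIntegral_sdiff heven hω0 hω1 hhf hhg hF hG hFi hGi hfixG hfixF
      hu hv
  constructor
  · intro u hu v hv
    rw [hPot hu hv]
    exact add_nonneg (integral_nonneg fun _ => primitive_nonneg hω0 _)
      (integral_nonneg fun _ => primitive_nonneg hω0 _)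
  · have hone : (1 : ℝ) ∈ Icc (0 : ℝ) 1 := right_mem_Icc.2 zero_le_one
    rw [Agap, hPot hone hone, sdiff_self]
    simp

/-- **Continuum fixed point positivity.** -/
theorem continuum_fixed_point_positivity
    (ω hf hg F G : ℝ → ℝ)
    (hω : IsAveragingKernel ω) (hhf : MemX hf) (hhg : MemX hg)
    (hF : MemPsi F) (hG : MemPsi G)
    (hFi : Interpolates F 0 1) (hGi : Interpolates G 0 1)
    (hfixG : ∀ x, G x = hg (conv F ω x))
    (hfixF : ∀ x, F x = hf (conv G ω x)) :
    (∀ u ∈ Icc (0:ℝ) 1, ∀ v ∈ Icc (0:ℝ) 1, 0 ≤ Pot hf hg u v) ∧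
      Agap hf hg = 0 :=
  continuum_fixed_point_positivity_general ω hf hg F G hω.1 hω.2.1 hω.2.2.2.2 hhf.1 hhg.1
    hF.1 hG.1 hFi hGi hfixG hfixF
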